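/- Let p ≥ 7 be a prime. Then Q_p(1) = ∑_{a=1}^{p-1} q_p(a) satisfies Q_p(1) ≡ (p-1) B̄_1 - p² B̄_{1,2} + (11/6) p³ B̄_{1,2} - p⁴ (B̄_{1,2} + B̄_{1,4}) (mod p⁵), where B̄_1 = (B_{p-1} + 1/p - 1)/(p-1), B̄_{1,2} = B_{p-3}/(p-3), and B̄_{1,4} = B_{p-5}/(p-5). -/

import Mathlib

/-!
Faulhaber's formula for the exponent `p - 1` reads
`∑_{a < p} a ^ (p - 1) = ∑_{k < p} C(p, k) B_k p ^ (p - 1 - k)`.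
Subtracting `p - 1` and dividing by `p`, the term `k = p - 1` gives `B_{p-1} + 1/p - 1 = (p - 1) B̄_1`.
The terms `k = p - 2` and `k = p - 4` vanish, since these indices are odd and greater than `1`.
The terms `k = p - 3` and `k = p - 5` are the polynomials
`p² (p - 1)(p - 2)(p - 3) / 6` and `p⁴ (p - 1)(p - 2)(p - 3)(p - 4)(p - 5) / 120` in `p`,
times `B̄_{1,2}` and `B̄_{1,4}`; expanding them gives the right-hand side modulo `p⁵`.
Each term with `k ≤ p - 6` is divisible by `p⁵`: its power of `p` contributes at least `p⁴`,
and `C(p, k)` one more factor `p` when `k ≥ 1`; for `k = 0` the term is `p ^ (p - 2)`.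

The only arithmetic input on Bernoulli numbers is that `B_k` is `p`-integral for `k < p - 1`, which
follows by induction from the recursion because its denominators are at most `k + 1 < p`.
-/

/-- The ring of `p`-integral rational numbers, as the rational numbers that lie in `ℤ_[p]`. -/
noncomputable def pIntegralRat (p : ℕ) [Fact p.Prime] : Subring ℚ :=
  (PadicInt.subring p).comap (Rat.castHom ℚ_[p])

section
variable {p : ℕ} [hp : Fact p.Prime]

lemma mem_pIntegralRat {x : ℚ} : x ∈ pIntegralRat p ↔ ‖(x : ℚ_[p])‖ ≤ 1 := Iff.rfl

lemma inv_mem_of_coprime {n : ℕ} (h : p.Coprime n) : (n : ℚ)⁻¹ ∈ pIntegralRat p := by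
  rw [mem_pIntegralRat]
  push_cast
  rw [norm_inv, Padic.norm_natCast_eq_one_iff.2 h, inv_one]

lemma inv_mem_of_lt {n : ℕ} (h0 : 0 < n) (h : n < p) : (n : ℚ)⁻¹ ∈ pIntegralRat p :=
  inv_mem_of_coprime (Nat.coprime_of_lt_prime h0.ne' h hp.out)

lemma bernoulli'_mem {n : ℕ} (h : n + 1 < p) : bernoulli' n ∈ pIntegralRat p := by
  induction n using Nat.strong_induction_on with
  | _ n ih =>
    rw [bernoulli'_def]
    refine sub_mem (one_mem _) (sum_mem fun k hk => ?_)
    have hk := Finset.mem_range.1 hk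
    have e : (n : ℚ) - k + 1 = ((n - k + 1 : ℕ) : ℚ) := by
      push_cast [Nat.cast_sub hk.le]; ring
    rw [e, div_eq_mul_inv]
    exact mul_mem (mul_mem (natCast_mem _ _) (inv_mem_of_lt (by omega) (by omega)))
      (ih k hk (by omega))

lemma bernoulli_mem {n : ℕ} (h : n + 1 < p) : bernoulli n ∈ pIntegralRat p :=
  mul_mem (pow_mem (neg_mem (one_mem _)) _) (bernoulli'_mem h)

/-- The Faulhaber terms of index `k ≤ p - 6` are divisible by `p ^ 6`. -/
lemma faulhaber_term_mem (hp7 : 7 ≤ p) {k : ℕ} (hk : k + 6 ≤ p) :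
    bernoulli k * (p.choose k) * (p : ℚ) ^ (p - k) / p / (p : ℚ) ^ 6 ∈ pIntegralRat p := by
  have hq : (p : ℚ) ≠ 0 := by exact_mod_cast hp.out.ne_zero
  rcases Nat.eq_zero_or_pos k with rfl | h0
  · have e : bernoulli 0 * (p.choose 0) * (p : ℚ) ^ (p - 0) / p / (p : ℚ) ^ 6
        = (p : ℚ) ^ (p - 7) := by
      obtain ⟨m, hm⟩ := Nat.exists_eq_add_of_le hp7
      have e1 : p - 0 = (p - 7) + 7 := by omega
      rw [e1, pow_add, bernoulli_zero, Nat.choose_zero_right]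
      field_simp
      push_cast
      ring
    rw [e]
    exact pow_mem (natCast_mem _ _) _
  · obtain ⟨c, hc⟩ := hp.out.dvd_choose_self h0.ne' (by omega : k < p)
    have e : bernoulli k * (p.choose k) * (p : ℚ) ^ (p - k) / p / (p : ℚ) ^ 6
        = bernoulli k * c * (p : ℚ) ^ (p - k - 6) := by
      have e1 : p - k = (p - k - 6) + 6 := by omega
      rw [hc]
      nth_rw 1 [e1]
      rw [pow_add]
      push_cast
      field_simp
    rw [e]
    exact mul_mem (mul_mem (bernoulli_mem (by omega)) (natCast_mem _ _))
      (pow_mem (natCast_mem _ _) _)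

end

lemma cast_choose_three (m : ℕ) :
    ((m + 7).choose (m + 4) : ℚ) = (m + 7) * (m + 6) * (m + 5) / 6 := by
  have h := Nat.descFactorial_eq_factorial_mul_choose (m + 7) 3
  rw [← Nat.choose_symm_of_eq_add (show m + 7 = 3 + (m + 4) by omega)]
  simp only [Nat.descFactorial_succ, Nat.descFactorial_zero, Nat.factorial] at h
  have h' := congrArg (Nat.cast (R := ℚ)) h
  simp at h'
  linarith

lemma cast_choose_five (m : ℕ) :
    ((m + 7).choose (m + 2) : ℚ)
      = (m + 7) * (m + 6) * (m + 5) * (m + 4) * (m + 3) / 120 := by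
  have h := Nat.descFactorial_eq_factorial_mul_choose (m + 7) 5
  rw [← Nat.choose_symm_of_eq_add (show m + 7 = 5 + (m + 2) by omega)]
  simp only [Nat.descFactorial_succ, Nat.descFactorial_zero, Nat.factorial] at h
  have h' := congrArg (Nat.cast (R := ℚ)) h
  simp at h'
  linarith

theorem Qp1_congruence (p : ℕ) [hp : Fact p.Prime] (hp7 : 7 ≤ p)
    (B1 B12 B14 : ℚ)
    (hB1 : B1 = (bernoulli (p - 1) + 1 / p - 1) / (p - 1))
    (hB12 : B12 = bernoulli (p - 3) / (p - 3))
    (hB14 : B14 = bernoulli (p - 5) / (p - 5)) :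
    ‖(((∑ a ∈ Finset.Icc 1 (p - 1), (((a : ℚ) ^ (p - 1) - 1) / p))
        - (((p : ℚ) - 1) * B1 - (p : ℚ) ^ 2 * B12 + (11 / 6) * (p : ℚ) ^ 3 * B12
            - (p : ℚ) ^ 4 * (B12 + B14)) : ℚ) : ℚ_[p])‖
      ≤ (p : ℝ) ^ (-5 : ℤ) := by
  set D : ℚ := (∑ a ∈ Finset.Icc 1 (p - 1), (((a : ℚ) ^ (p - 1) - 1) / p))
        - (((p : ℚ) - 1) * B1 - (p : ℚ) ^ 2 * B12 + (11 / 6) * (p : ℚ) ^ 3 * B12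
            - (p : ℚ) ^ 4 * (B12 + B14)) with hD
  suffices h : ∃ y ∈ pIntegralRat p, D = (p : ℚ) ^ 5 * y by
    obtain ⟨y, hy, e⟩ := h
    rw [e]
    push_cast
    rw [norm_mul, Padic.norm_p_pow]
    exact mul_le_of_le_one_right (by positivity) hy
  have hq : (p : ℚ) ≠ 0 := by exact_mod_cast hp.out.ne_zero
  obtain ⟨m, hm⟩ := Nat.exists_eq_add_of_le' hp7
  have hpm : (p : ℚ) = m + 7 := by rw [hm]; push_cast; ring
  have hodd : Odd p := hp.out.odd_of_ne_two (by omega)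
  have hm0 : (0 : ℚ) ≤ m := by positivity
  have hd1 : (p : ℚ) - 1 ≠ 0 := by rw [hpm]; linarith
  have hd3 : (p : ℚ) - 3 ≠ 0 := by rw [hpm]; linarith
  have hd5 : (p : ℚ) - 5 ≠ 0 := by rw [hpm]; linarith
  have hB12R : B12 ∈ pIntegralRat p := by
    have := mul_mem (bernoulli_mem (p := p) (n := p - 3) (by omega))
      (inv_mem_of_lt (p := p) (n := p - 3) (by omega) (by omega))
    rwa [Nat.cast_sub (by omega), ← div_eq_mul_inv, Nat.cast_ofNat, ← hB12] at this
  have hB14R : B14 ∈ pIntegralRat p := by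
    have := mul_mem (bernoulli_mem (p := p) (n := p - 5) (by omega))
      (inv_mem_of_lt (p := p) (n := p - 5) (by omega) (by omega))
    rwa [Nat.cast_sub (by omega), ← div_eq_mul_inv, Nat.cast_ofNat, ← hB14] at this
  have h6 : (6 : ℚ)⁻¹ ∈ pIntegralRat p := inv_mem_of_lt (n := 6) (by omega) (by omega)
  have h120 : (120 : ℚ)⁻¹ ∈ pIntegralRat p := by
    have h4 : (4 : ℚ)⁻¹ ∈ pIntegralRat p := inv_mem_of_lt (n := 4) (by omega) (by omega)
    have h5 : (5 : ℚ)⁻¹ ∈ pIntegralRat p := inv_mem_of_lt (n := 5) (by omega) (by omega)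
    have := mul_mem (mul_mem h6 h4) h5
    norm_num at this ⊢
    exact this
  have hS : (∑ a ∈ Finset.Icc 1 (p - 1), (((a : ℚ) ^ (p - 1) - 1) / p))
      = ((∑ k ∈ Finset.range p, (k : ℚ) ^ (p - 1)) - (p - 1)) / p := by
    have e : Finset.range p = insert 0 (Finset.Icc 1 (p - 1)) := by
      ext x; simp; omega
    rw [e, Finset.sum_insert (by simp), ← Finset.sum_div, Finset.sum_sub_distrib]
    simp [Nat.cast_sub (show 1 ≤ p by omega), show p - 1 ≠ 0 by omega]
  set L : ℚ := ∑ k ∈ Finset.range (m + 2),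
    bernoulli k * (p.choose k) * (p : ℚ) ^ (p - k) / p with hL
  have hLR : L / (p : ℚ) ^ 6 ∈ pIntegralRat p := by
    rw [hL, Finset.sum_div]
    refine sum_mem fun k hk => faulhaber_term_mem hp7 ?_
    have := Finset.mem_range.1 hk
    omega
  have hF : (∑ k ∈ Finset.range p, (k : ℚ) ^ (p - 1))
      = L + (p : ℚ) ^ 5 * ((p - 1) * (p - 2) * (p - 3) * (p - 4) / 120) * ((p - 5) * B14)
        + (p : ℚ) ^ 3 * ((p - 1) * (p - 2) / 6) * ((p - 3) * B12)
        + p * bernoulli (p - 1) := by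
    have z1 : bernoulli (m + 3) = 0 :=
      bernoulli_eq_zero_of_odd (by rw [hm] at hodd; grind) (by omega)
    have z2 : bernoulli (m + 5) = 0 :=
      bernoulli_eq_zero_of_odd (by rw [hm] at hodd; grind) (by omega)
    have e12 : ((p : ℚ) - 3) * B12 = bernoulli (m + 4) := by
      rw [hB12, mul_div_cancel₀ _ hd3, show p - 3 = m + 4 by omega]
    have e14 : ((p : ℚ) - 5) * B14 = bernoulli (m + 2) := by
      rw [hB14, mul_div_cancel₀ _ hd5, show p - 5 = m + 2 by omega]
    have c3 : (p.choose (m + 4) : ℚ) = p * (p - 1) * (p - 2) / 6 := by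
      rw [hpm, hm, cast_choose_three]; ring
    have c5 : (p.choose (m + 2) : ℚ) = p * (p - 1) * (p - 2) * (p - 3) * (p - 4) / 120 := by
      rw [hpm, hm, cast_choose_five]; ring
    have c1 : (p.choose (m + 6) : ℚ) = p := by
      rw [hm, Nat.choose_succ_self_right]
    have c0 : ((p - 1 : ℕ) : ℚ) + 1 = p := by
      rw [Nat.cast_sub (by omega)]; simp
    rw [sum_range_pow, c0, show p - 1 + 1 = p by omega]
    rw [show Finset.range p = Finset.range (m + 2 + 1 + 1 + 1 + 1 + 1) by rw [hm]]
    simp only [Finset.sum_range_succ]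
    rw [← Finset.sum_range_succ, ← Finset.sum_range_succ, ← hL]
    rw [z1, z2, c3, c5, c1, e12, e14, show p - 1 = m + 6 by omega, show p - (m + 2) = 5 by omega,
      show p - (m + 4) = 3 by omega, show p - (m + 6) = 1 by omega]
    field_simp
    ring
  -- The coefficients come from `(X-1)(X-2)(X-3) = X³ - 6X² + 11X - 6` and
  -- `(X-1)⋯(X-5) = X⁵ - 15X⁴ + 85X³ - 225X² + 274X - 120`.
  refine ⟨L / (p : ℚ) ^ 6 + B12 * 6⁻¹
    + ((p : ℚ) ^ 4 - (15 : ℕ) * (p : ℚ) ^ 3 + (85 : ℕ) * (p : ℚ) ^ 2 - (225 : ℕ) * p + (274 : ℕ))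
      * 120⁻¹ * B14, ?_, ?_⟩
  · have hpR : (p : ℚ) ∈ pIntegralRat p := natCast_mem _ _
    refine add_mem (add_mem hLR (mul_mem hB12R h6)) (mul_mem (mul_mem ?_ h120) hB14R)
    exact add_mem (sub_mem (add_mem (sub_mem (pow_mem hpR _)
      (mul_mem (natCast_mem _ _) (pow_mem hpR _))) (mul_mem (natCast_mem _ _) (pow_mem hpR _)))
      (mul_mem (natCast_mem _ _) hpR)) (natCast_mem _ _)
  · have e1 : ((p : ℚ) - 1) * B1 = bernoulli (p - 1) + 1 / p - 1 := by
      rw [hB1, mul_div_cancel₀ _ hd1]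
    rw [hD, hS, hF, e1]
    push_cast
    field_simp
    ring
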